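/- Let R > 0, A > 0 and C₀ > 0. Let u : ℝ³ → ℝ be continuous and nonnegative with u(x) → 0 as |x| → ∞, and let w : ℝ³ → [0, ∞) be continuous with w(x) ≤ C₀ e^{-√A |x|} for all x. Assume that u is twice continuously differentiable on the open set Ω = {x ∈ ℝ³ : |x| > R and u(x) > w(x)} and that Δu(x) ≥ A u(x) for all x ∈ Ω. Then there exists a constant C > 0 such that u(x) ≤ C e^{-√A |x|} for all x with |x| ≥ R. -/

import Mathlib

open MeasureTheory Filter Set

/-- The Laplacian `Δf = ∑_{j=1}^{3} ∂²f/∂x_j²` of a function on `ℝ³`. -/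
noncomputable def laplacian (f : EuclideanSpace ℝ (Fin 3) → ℝ)
    (x : EuclideanSpace ℝ (Fin 3)) : ℝ :=
  ∑ i : Fin 3,
    fderiv ℝ (fun y => fderiv ℝ f y (EuclideanSpace.single i 1)) x (EuclideanSpace.single i 1)

/-!
The barrier `g(x) = C e^{-√A |x|}` satisfies `Δg ≤ A g` away from the origin, because in dimension
`d` the first-order part of its radial Laplacian, `-(d - 1) √A g / |x|`, is nonpositive. Take `C` so
large that `g` dominates `C₀ e^{-√A |x|}` everywhere and `u` on the sphere `|x| = R`. If `u - g`
were positive somewhere outside the ball it would attain a positive maximum there, as it vanishes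
at infinity. At that point `u > g ≥ w`, so the differential inequality holds and
`Δ(u - g) ≥ A (u - g) > 0`, which is impossible at a local maximum.
-/

open scoped Laplacian

section SecondDerivative

theorem deriv_deriv_nonpos_of_isLocalMax {f : ℝ → ℝ} {a : ℝ} (hmax : IsLocalMax f a)
    (hf : ContinuousAt f a) : deriv (deriv f) a ≤ 0 := by
  -- If `f''(a) > 0` then `a` is a local minimum as well, so `f` is constant near `a`.
  by_contra! hpos
  have hmin : IsLocalMin f a := isLocalMin_of_deriv_deriv_pos hpos hmax.deriv_eq_zero hf
  have hconst : f =ᶠ[nhds a] fun _ => f a := by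
    filter_upwards [hmin, hmax] with t hge hle using le_antisymm hle hge
  have hzero : deriv (deriv f) a = 0 := by simp [hconst.deriv.deriv_eq]
  exact hpos.ne' hzero

variable {E F : Type*} [NormedAddCommGroup E] [NormedSpace ℝ E] [NormedAddCommGroup F]
  [NormedSpace ℝ F] {f : E → F} {x : E}

theorem fderiv_fderiv_apply_eq_iteratedFDeriv (hf : ContDiffAt ℝ 2 f x) (v w : E) :
    fderiv ℝ (fun y => fderiv ℝ f y v) x w = iteratedFDeriv ℝ 2 f x ![w, v] := by
  have hf' : DifferentiableAt ℝ (fderiv ℝ f) x :=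
    (hf.fderiv_right (m := 1) (by norm_num)).differentiableAt one_ne_zero
  simp [iteratedFDeriv_two_apply, fderiv_clm_apply hf' (differentiableAt_const v)]

theorem deriv_deriv_comp_add_smul (hf : ContDiffAt ℝ 2 f x) (v : E) :
    deriv (deriv fun t : ℝ => f (x + t • v)) 0 = iteratedFDeriv ℝ 2 f x ![v, v] := by
  have hline : Tendsto (fun t : ℝ => x + t • v) (nhds 0) (nhds x) :=
    Continuous.tendsto' (by fun_prop) _ _ (by simp)
  have hfst : deriv (fun t : ℝ => f (x + t • v)) =ᶠ[nhds 0] fun t => fderiv ℝ f (x + t • v) v := by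
    filter_upwards [hline.eventually (hf.eventually (by simp))] with t ht
    exact (ht.differentiableAt two_ne_zero).deriv_comp_add_smul
  have hsnd : DifferentiableAt ℝ (fun y => fderiv ℝ f y v) (x + (0 : ℝ) • v) := by
    simpa using ((hf.fderiv_right (m := 1) (by norm_num)).differentiableAt one_ne_zero).clm_apply
      (differentiableAt_const v)
  rw [hfst.deriv_eq, hsnd.deriv_comp_add_smul, zero_smul, add_zero,
    fderiv_fderiv_apply_eq_iteratedFDeriv hf]

end SecondDerivative

theorem laplacian_eq_innerProductSpace_laplacian {f : EuclideanSpace ℝ (Fin 3) → ℝ}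
    {x : EuclideanSpace ℝ (Fin 3)} (hf : ContDiffAt ℝ 2 f x) : laplacian f x = Δ f x := by
  rw [InnerProductSpace.laplacian_eq_iteratedFDeriv_orthonormalBasis f
    (EuclideanSpace.basisFun (Fin 3) ℝ)]
  simp [laplacian, fderiv_fderiv_apply_eq_iteratedFDeriv hf]

section MaximumPrinciple

variable {E : Type*} [NormedAddCommGroup E] [InnerProductSpace ℝ E] [FiniteDimensional ℝ E]

theorem laplacian_nonpos_of_isLocalMax {f : E → ℝ} {x : E} (hf : ContDiffAt ℝ 2 f x)
    (hmax : IsLocalMax f x) : Δ f x ≤ 0 := by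
  rw [InnerProductSpace.laplacian_eq_iteratedFDeriv_stdOrthonormalBasis]
  refine Finset.sum_nonpos fun i _ => ?_
  have hline : Continuous fun t : ℝ => x + t • stdOrthonormalBasis ℝ E i := by fun_prop
  rw [← deriv_deriv_comp_add_smul hf]
  apply deriv_deriv_nonpos_of_isLocalMax
  · exact IsLocalMax.comp_continuous (g := fun t : ℝ => x + t • stdOrthonormalBasis ℝ E i)
      (by simpa using hmax) hline.continuousAt
  · exact ContinuousAt.comp (f := fun t : ℝ => x + t • stdOrthonormalBasis ℝ E i)
      (by simpa using hf.continuousAt) hline.continuousAt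

theorem nonpos_of_laplacian_pos_of_frontier_nonpos {Ω : Set E} {f : E → ℝ} (hΩ : IsOpen Ω)
    (hf : ContinuousOn f (closure Ω)) (hf_frontier : ∀ x ∈ frontier Ω, f x ≤ 0)
    (hf_infty : ∀ ε > 0, ∀ᶠ x in cocompact E, f x < ε)
    (hf_smooth : ∀ x ∈ Ω, 0 < f x → ContDiffAt ℝ 2 f x)
    (hf_lap : ∀ x ∈ Ω, 0 < f x → 0 < Δ f x) :
    ∀ x ∈ Ω, f x ≤ 0 := by
  by_contra! ⟨y, hyΩ, hy⟩
  obtain ⟨x, hx, hmax⟩ : ∃ x ∈ closure Ω, IsMaxOn f (closure Ω) x :=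
    hf.exists_isMaxOn' isClosed_closure (subset_closure hyΩ)
      (((hf_infty _ hy).mono fun _ => le_of_lt).filter_mono inf_le_left)
  have hx_pos : 0 < f x := hy.trans_le (hmax (subset_closure hyΩ))
  have hxΩ : x ∈ Ω := by
    by_contra hxΩ
    exact (hf_frontier x (hΩ.frontier_eq ▸ ⟨hx, hxΩ⟩)).not_gt hx_pos
  have hloc : IsLocalMax f x :=
    hmax.isLocalMax (mem_of_superset (hΩ.mem_nhds hxΩ) subset_closure)
  exact (laplacian_nonpos_of_isLocalMax (hf_smooth x hxΩ hx_pos) hloc).not_gt (hf_lap x hxΩ hx_pos)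

end MaximumPrinciple

section Radial

variable {E : Type*} [NormedAddCommGroup E] [InnerProductSpace ℝ E]

theorem hasFDerivAt_norm_of_ne_zero {x : E} (hx : x ≠ 0) :
    HasFDerivAt (fun y : E => ‖y‖) (‖x‖⁻¹ • innerSL ℝ x) x := by
  have hsqrt := (hasStrictFDerivAt_norm_sq x).hasFDerivAt.sqrt (by positivity)
  simp only [Real.sqrt_sq (norm_nonneg _)] at hsqrt
  refine hsqrt.congr_fderiv ?_
  ext v
  simp only [one_div, mul_inv_rev, smul_apply, coe_innerSL_apply, nsmul_eq_mul, Nat.cast_ofNat,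
    smul_eq_mul]
  field_simp

theorem hasFDerivAt_comp_norm {φ : ℝ → ℝ} {φ' : ℝ} {x : E} (hx : x ≠ 0)
    (hφ : HasDerivAt φ φ' ‖x‖) :
    HasFDerivAt (fun y : E => φ ‖y‖) ((φ' / ‖x‖) • innerSL ℝ x) x := by
  rw [div_eq_mul_inv, mul_smul]
  exact hφ.comp_hasFDerivAt x (hasFDerivAt_norm_of_ne_zero hx)

theorem iteratedFDeriv_two_comp_norm {φ : ℝ → ℝ} {x : E} (hx : x ≠ 0)
    (hφ : ContDiffAt ℝ 2 φ ‖x‖) (v w : E) :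
    iteratedFDeriv ℝ 2 (fun y : E => φ ‖y‖) x ![v, w] =
      (deriv (deriv φ) ‖x‖ - deriv φ ‖x‖ / ‖x‖) * (inner ℝ x v * inner ℝ x w / ‖x‖ ^ 2)
        + deriv φ ‖x‖ / ‖x‖ * inner ℝ v w := by
  have hnorm : ‖x‖ ≠ 0 := norm_ne_zero_iff.2 hx
  have hφ'' : HasDerivAt (deriv φ) (deriv (deriv φ) ‖x‖) ‖x‖ :=
    ((hφ.derivWithin (m := 1) (by norm_num)).differentiableAt one_ne_zero).hasDerivAt
  have hcomp : ContDiffAt ℝ 2 (fun y : E => φ ‖y‖) x := hφ.comp x (contDiffAt_norm ℝ hx)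
  have hfst : (fun y => fderiv ℝ (fun z : E => φ ‖z‖) y w) =ᶠ[nhds x]
      fun y => deriv φ ‖y‖ / ‖y‖ * inner ℝ w y := by
    filter_upwards [isOpen_ne.mem_nhds hx,
      continuous_norm.continuousAt.eventually (hφ.eventually (by simp))] with y hy hφy
    have hφy' := (hφy.differentiableAt two_ne_zero).hasDerivAt
    simp [(hasFDerivAt_comp_norm hy hφy').fderiv, real_inner_comm]
  have hsnd : HasFDerivAt (fun y : E => deriv φ ‖y‖ / ‖y‖ * inner ℝ w y) _ x :=
    (hasFDerivAt_comp_norm hx (hφ''.div (hasDerivAt_id _) hnorm)).mul (innerSL ℝ w).hasFDerivAt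
  rw [← fderiv_fderiv_apply_eq_iteratedFDeriv hcomp, hfst.fderiv_eq, hsnd.fderiv]
  simp only [Pi.div_apply, id_eq, real_inner_comm, mul_one, add_apply, smul_apply,
    coe_innerSL_apply, smul_eq_mul]
  field_simp
  ring

theorem laplacian_comp_norm [FiniteDimensional ℝ E] {φ : ℝ → ℝ} {x : E} (hx : x ≠ 0)
    (hφ : ContDiffAt ℝ 2 φ ‖x‖) :
    Δ (fun y : E => φ ‖y‖) x =
      deriv (deriv φ) ‖x‖ + (Module.finrank ℝ E - 1) * (deriv φ ‖x‖ / ‖x‖) := by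
  have hparseval : ∑ i, inner ℝ x (stdOrthonormalBasis ℝ E i) ^ 2 = ‖x‖ ^ 2 := by
    simpa using (stdOrthonormalBasis ℝ E).sum_sq_norm_inner_left x
  simp only [InnerProductSpace.laplacian_eq_iteratedFDeriv_stdOrthonormalBasis,
    iteratedFDeriv_two_comp_norm hx hφ, Finset.sum_add_distrib, ← Finset.mul_sum, ← sq,
    ← Finset.sum_div, hparseval]
  simp only [inner_self_eq_norm_sq_to_K, OrthonormalBasis.norm_eq_one, Real.ringHom_apply, one_pow,
    Finset.sum_const, Finset.card_univ, Fintype.card_fin, nsmul_eq_mul, mul_one]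
  field_simp
  ring

end Radial

section Decay

variable {E : Type*} [NormedAddCommGroup E] [InnerProductSpace ℝ E] [FiniteDimensional ℝ E]

theorem laplacian_mul_exp_neg_mul_norm_le {s C : ℝ} (hs : 0 ≤ s) (hC : 0 ≤ C) {x : E}
    (hx : x ≠ 0) :
    Δ (fun y : E => C * Real.exp (-s * ‖y‖)) x ≤ s ^ 2 * (C * Real.exp (-s * ‖x‖)) := by
  have hderiv (D : ℝ) : deriv (fun r => D * Real.exp (-s * r)) =
      fun r => -s * D * Real.exp (-s * r) := by
    ext r
    have hexp : HasDerivAt (fun r => D * Real.exp (-s * r)) (D * (Real.exp (-s * r) * -s)) r :=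
      (hasDerivAt_const_mul (-s)).exp.const_mul D
    rw [hexp.deriv]
    ring
  have hdim : (1 : ℝ) ≤ Module.finrank ℝ E := by
    have : Nontrivial E := ⟨x, 0, hx⟩
    exact_mod_cast Module.finrank_pos (R := ℝ) (M := E)
  have hfirst : 0 ≤ (Module.finrank ℝ E - 1) * (s * (C * Real.exp (-s * ‖x‖)) / ‖x‖) :=
    mul_nonneg (sub_nonneg.2 hdim) (by positivity)
  rw [laplacian_comp_norm (φ := fun r => C * Real.exp (-s * r)) hx (by fun_prop), hderiv, hderiv]
  linear_combination hfirst

theorem le_mul_exp_neg_norm_of_laplacian_ge {A ρ C : ℝ} {u : E → ℝ} (hA : 0 < A) (hρ : 0 ≤ ρ)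
    (hC : 0 ≤ C) (hu : ContinuousOn u {x | ρ ≤ ‖x‖}) (hu_decay : Tendsto u (cocompact E) (nhds 0))
    (hu_sphere : ∀ x, ‖x‖ = ρ → u x ≤ C * Real.exp (-√A * ‖x‖))
    (hu_smooth : ∀ x, ρ < ‖x‖ → C * Real.exp (-√A * ‖x‖) < u x → ContDiffAt ℝ 2 u x)
    (hu_sub : ∀ x, ρ < ‖x‖ → C * Real.exp (-√A * ‖x‖) < u x → A * u x ≤ Δ u x) :
    ∀ x, ρ ≤ ‖x‖ → u x ≤ C * Real.exp (-√A * ‖x‖) := by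
  set g : E → ℝ := fun x => C * Real.exp (-√A * ‖x‖)
  have hg_smooth {x : E} (hx : ρ < ‖x‖) : ContDiffAt ℝ 2 g x :=
    contDiffAt_const.mul
      (contDiffAt_const.mul (contDiffAt_norm ℝ (norm_pos_iff.1 (hρ.trans_lt hx)))).exp
  have hfrontier : frontier {x : E | ρ < ‖x‖} ⊆ {x | ‖x‖ = ρ} :=
    (frontier_lt_subset_eq continuous_const continuous_norm).trans fun _ => Eq.symm
  have hclosure : closure {x : E | ρ < ‖x‖} ⊆ {x | ρ ≤ ‖x‖} :=
    closure_lt_subset_le continuous_const continuous_norm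
  have hle : ∀ x ∈ {x : E | ρ < ‖x‖}, (u - g) x ≤ 0 := by
    refine nonpos_of_laplacian_pos_of_frontier_nonpos
      (isOpen_lt continuous_const continuous_norm) ((hu.mono hclosure).sub (by fun_prop))
      (fun x hx => sub_nonpos.2 (hu_sphere x (hfrontier hx))) ?_
      (fun x hx hpos => (hu_smooth x hx (sub_pos.1 hpos)).sub (hg_smooth hx)) ?_
    · intro ε hε
      filter_upwards [hu_decay.eventually_lt_const hε] with x hx
      have hgx : 0 ≤ g x := by positivity
      exact (sub_le_self _ hgx).trans_lt hx
    · intro x hx hpos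
      have hx0 : x ≠ 0 := norm_pos_iff.1 (hρ.trans_lt hx)
      have hgu : g x < u x := sub_pos.1 hpos
      rw [(hu_smooth x hx hgu).laplacian_sub (hg_smooth hx), sub_pos]
      calc Δ g x ≤ √A ^ 2 * g x := laplacian_mul_exp_neg_mul_norm_le A.sqrt_nonneg hC hx0
        _ = A * g x := by rw [Real.sq_sqrt hA.le]
        _ < A * u x := by gcongr
        _ ≤ Δ u x := hu_sub x hx hgu
  intro x hx
  rcases hx.eq_or_lt with hx | hx
  · exact hu_sphere x hx.symm
  · exact sub_nonpos.1 (hle x hx)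

theorem exponential_decay_on_exceedance_set_general {R A C₀ : ℝ} {u : E → ℝ} (hA : 0 < A)
    (hu : ContinuousOn u {x | R ≤ ‖x‖}) (hu_decay : Tendsto u (cocompact E) (nhds 0))
    (hu_smooth : ∀ x, R < ‖x‖ → C₀ * Real.exp (-√A * ‖x‖) < u x → ContDiffAt ℝ 2 u x)
    (hu_sub : ∀ x, R < ‖x‖ → C₀ * Real.exp (-√A * ‖x‖) < u x → A * u x ≤ Δ u x) :
    ∃ C : ℝ, 0 < C ∧ ∀ x, R ≤ ‖x‖ → u x ≤ C * Real.exp (-√A * ‖x‖) := by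
  -- For `R < 0` the region contains the origin, where the barrier is not differentiable, so the
  -- comparison takes place outside the ball of radius `max R 0` instead.
  set ρ := max R 0
  have hsphere : Metric.sphere (0 : E) ρ ⊆ {x | R ≤ ‖x‖} := fun x hx =>
    (le_max_left R 0).trans_eq (mem_sphere_zero_iff_norm.1 hx).symm
  obtain ⟨M, hM⟩ := (isCompact_sphere (0 : E) ρ).bddAbove_image (hu.mono hsphere)
  set C := max (max C₀ (M * Real.exp (√A * ρ))) 1
  have hC₀ : C₀ ≤ C := (le_max_left _ _).trans (le_max_left _ _)
  have hMC : M * Real.exp (√A * ρ) ≤ C := (le_max_right _ _).trans (le_max_left _ _)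
  have hCpos : 0 < C := one_pos.trans_le (le_max_right _ _)
  have hexceed {x : E} (hx : C * Real.exp (-√A * ‖x‖) < u x) : C₀ * Real.exp (-√A * ‖x‖) < u x :=
    hx.trans_le' (by gcongr)
  have hu_sphere (x : E) (hx : ‖x‖ = ρ) : u x ≤ C * Real.exp (-√A * ‖x‖) :=
    calc u x ≤ M := hM (mem_image_of_mem u (mem_sphere_zero_iff_norm.2 hx))
      _ = M * Real.exp (√A * ρ) * Real.exp (-√A * ‖x‖) := by
        rw [hx, mul_assoc, ← Real.exp_add]; simp
      _ ≤ C * Real.exp (-√A * ‖x‖) := by gcongr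
  exact ⟨C, hCpos, fun x hx => le_mul_exp_neg_norm_of_laplacian_ge hA (le_max_right R 0)
    hCpos.le (hu.mono fun y hy => (le_max_left R 0).trans hy) hu_decay hu_sphere
    (fun y hy hgy => hu_smooth y ((le_max_left R 0).trans_lt hy) (hexceed hgy))
    (fun y hy hgy => hu_sub y ((le_max_left R 0).trans_lt hy) (hexceed hgy))
    x (max_le hx (norm_nonneg x))⟩

end Decay

/-- exponential decay with comparison only on the set `{u > w}`.  If `u ≥ 0`
is continuous and tends to `0` at infinity, `w ≥ 0` is continuous with
`w(x) ≤ C₀ e^{-√A |x|}`, and `u` is `C²` with `Δu ≥ A u` on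
`Ω = {x : |x| > R, u(x) > w(x)}`, then `u(x) ≤ C e^{-√A |x|}` for `|x| ≥ R`. -/
theorem exponential_decay_on_exceedance_set
    (R A C₀ : ℝ) (hR : 0 < R) (hA : 0 < A) (hC₀ : 0 < C₀)
    (u w : EuclideanSpace ℝ (Fin 3) → ℝ)
    (hu_cont : Continuous u) (hu_nonneg : ∀ x, 0 ≤ u x)
    (hu_decay : Tendsto u (cocompact (EuclideanSpace ℝ (Fin 3))) (nhds 0))
    (hw_cont : Continuous w) (hw_nonneg : ∀ x, 0 ≤ w x)
    (hw_bound : ∀ x : EuclideanSpace ℝ (Fin 3), w x ≤ C₀ * Real.exp (-Real.sqrt A * ‖x‖))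
    (hu_smooth : ContDiffOn ℝ 2 u {x | R < ‖x‖ ∧ w x < u x})
    (hu_sub : ∀ x : EuclideanSpace ℝ (Fin 3), R < ‖x‖ → w x < u x →
      A * u x ≤ laplacian u x) :
    ∃ C : ℝ, 0 < C ∧ ∀ x : EuclideanSpace ℝ (Fin 3), R ≤ ‖x‖ →
      u x ≤ C * Real.exp (-Real.sqrt A * ‖x‖) := by
  have hopen : IsOpen {x | R < ‖x‖ ∧ w x < u x} :=
    (isOpen_lt continuous_const continuous_norm).inter (isOpen_lt hw_cont hu_cont)
  have hu_contDiffAt {x} (hx : R < ‖x‖) (hwu : w x < u x) : ContDiffAt ℝ 2 u x :=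
    hu_smooth.contDiffAt (hopen.mem_nhds ⟨hx, hwu⟩)
  refine exponential_decay_on_exceedance_set_general hA hu_cont.continuousOn hu_decay
    (fun x hx hlt => hu_contDiffAt hx ((hw_bound x).trans_lt hlt)) fun x hx hlt => ?_
  have hwu : w x < u x := (hw_bound x).trans_lt hlt
  exact (hu_sub x hx hwu).trans_eq
    (laplacian_eq_innerProductSpace_laplacian (hu_contDiffAt hx hwu))
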